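/- Let A be a bounded invertible Mealy automaton over X with A = C(A). Then for every finite word v, the orbit O(v) equals the union of the e-orbit O^e(v) together with the e-orbits O^e(u) over all post-critical words u ∈ O(v). -/

import Mathlib

/-- A Mealy automaton over alphabet `X` with state set `S`:
the transition-output function sends `(s, x)` to `(output letter, next state)`. -/
structure Mealy (S X : Type*) where
  step : S → X → X × S

namespace Mealy

variable {S X : Type*}

/-- The section `s|_v`: the state reached after processing the word `v` from state `s`. -/
def sec (A : Mealy S X) (s : S) : List X → S
  | [] => s
  | x :: v => A.sec (A.step s x).2 v

/-- The action of a state on finite words (lists of letters, read left to right). -/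
def act (A : Mealy S X) (s : S) : List X → List X
  | [] => []
  | x :: v => (A.step s x).1 :: A.act (A.step s x).2 v

/-- A state is trivial if it acts on `X^*` as the identity. -/
def IsTrivialState (A : Mealy S X) (s : S) : Prop := ∀ v : List X, A.act s v = v

/-- An automaton is invertible if every state acts on the letters by a permutation. -/
def Invertible (A : Mealy S X) : Prop :=
  ∀ s : S, Function.Bijective fun x : X => (A.step s x).1

/-- The automaton group `G_A`: the subgroup of permutations of `X^*` generated by
the permutations defined by the states of `A`. -/
def autGroup (A : Mealy S X) : Subgroup (Equiv.Perm (List X)) :=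
  Subgroup.closure { f : Equiv.Perm (List X) | ∃ s : S, ∀ v : List X, f v = A.act s v }

/-- A left-infinite sequence `…x₂x₁` is encoded as `p : ℕ → X` with `p 0 = x₁`, `p 1 = x₂`, ….
It is post-critical if it is the sequence of input labels or of output labels of a
left-infinite directed path in `A` ending at a non-trivial state. -/
def IsPostCritical (A : Mealy S X) (p : ℕ → X) : Prop :=
  ∃ (σ : ℕ → S) (inp out : ℕ → X),
    (∀ n, A.step (σ (n + 1)) (inp n) = (out n, σ n)) ∧
      ¬A.IsTrivialState (σ 0) ∧ (p = inp ∨ p = out)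

/-- The post-critical set of `A`. -/
def PostCriticalSet (A : Mealy S X) : Set (ℕ → X) := { p | A.IsPostCritical p }

/-- An automaton is bounded if its post-critical set is finite. -/
def Bounded (A : Mealy S X) : Prop := A.PostCriticalSet.Finite

/-- The length-`n` suffix (as a finite word, read left to right) of a left-infinite
sequence `…x₂x₁` encoded as `p : ℕ → X`: the word `xₙ…x₂x₁`. -/
def lsuffix (p : ℕ → X) (n : ℕ) : List X := (List.range n).reverse.map p

/-- A finite word is post-critical if it is a suffix of some post-critical sequence. -/
def IsPostCriticalWord (A : Mealy S X) (v : List X) : Prop :=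
  ∃ p : ℕ → X, A.IsPostCritical p ∧ v = lsuffix p v.length

/-- The base relation for `e`-equivalence: `v ≈ u` if some state `s` satisfies
`s|_v` trivial and `s(v) = u`, or `s|_u` trivial and `s(u) = v`. -/
def ERel (A : Mealy S X) (v u : List X) : Prop :=
  ∃ s : S, (A.IsTrivialState (A.sec s v) ∧ A.act s v = u) ∨
    (A.IsTrivialState (A.sec s u) ∧ A.act s u = v)

/-- `e`-equivalence: the equivalence relation generated by `≈`. -/
def EEquiv (A : Mealy S X) : List X → List X → Prop := Relation.EqvGen A.ERel

/-- The `e`-orbit of a word. -/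
def eOrbit (A : Mealy S X) (v : List X) : Set (List X) := { u | A.EEquiv v u }

/-- The orbit of a finite word under the automaton group. -/
def orbit (A : Mealy S X) (v : List X) : Set (List X) := { u | ∃ g ∈ A.autGroup, g v = u }

/-- Reachability by a directed path in the automaton. -/
def Reaches (A : Mealy S X) : S → S → Prop :=
  Relation.ReflTransGen fun a b => ∃ x : X, (A.step a x).2 = b

/-- The states of the circuit part `C(A)`: states reachable by a directed path
from some directed cycle of `A`. -/
def circuitStates (A : Mealy S X) : Set S :=
  { s | ∃ t : S, (∃ x : X, A.Reaches (A.step t x).2 t) ∧ A.Reaches t s }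

/-- The circuit part `C(A)` as a subautomaton. -/
def circuitPart (A : Mealy S X) : Mealy A.circuitStates X where
  step s x :=
    ((A.step s.1 x).1,
      ⟨(A.step s.1 x).2, by
        obtain ⟨t, hc, hr⟩ := s.2
        exact ⟨t, hc, hr.tail ⟨x, rfl⟩⟩⟩)

/-- The subautomaton induced on a subset of states closed under transitions. -/
def subautomaton (A : Mealy S X) (T : Set S)
    (hT : ∀ s ∈ T, ∀ x : X, (A.step s x).2 ∈ T) : Mealy T X where
  step s x := ((A.step s.1 x).1, ⟨(A.step s.1 x).2, hT s.1 s.2 x⟩)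

/-- The extension of a length- and prefix-preserving map on finite words to
right-infinite sequences (letter by letter). -/
def extOmega (f : List X → List X) (w : ℕ → X) : ℕ → X :=
  fun n => (f ((List.range (n + 1)).map w)).getD n (w n)

/-- The orbit of a right-infinite sequence under the automaton group. -/
def orbitOmega (A : Mealy S X) (w : ℕ → X) : Set (ℕ → X) :=
  { w' | ∃ g ∈ A.autGroup, w' = extOmega (⇑(g : Equiv.Perm (List X))) w }

/-- The group `G_A` is level-transitive if it acts transitively on each level `X^n`. -/
def LevelTransitive (A : Mealy S X) : Prop :=
  ∀ v u : List X, v.length = u.length → ∃ g ∈ A.autGroup, g v = u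

end Mealy

/-- The run of a deterministic finite-state machine on a right-infinite input:
`dfaRun δ q₀ w n` is the state after reading the first `n` letters. -/
def dfaRun {Q X : Type*} (δ : Q → X → Q) (q₀ : Q) (w : ℕ → X) : ℕ → Q
  | 0 => q₀
  | n + 1 => δ (dfaRun δ q₀ w n) (w n)

/-- A concrete encoding of an invertible Mealy automaton (with state set `Fin n`
over alphabet `Fin k`) as a natural number. -/
def encodeAut (n k : ℕ) (step : Fin n → Fin k → Fin k × Fin n) : ℕ :=
  Nat.pair n (Nat.pair k (Encodable.encode
    ((List.finRange n).flatMap fun s =>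
      (List.finRange k).map fun x =>
        Nat.pair ((step s x).1 : ℕ) ((step s x).2 : ℕ))))

namespace Mealy

variable {S X : Type*}

theorem sec_snoc (A : Mealy S X) (s : S) (v : List X) (x : X) :
    A.sec s (v ++ [x]) = (A.step (A.sec s v) x).2 := by
  induction v generalizing s with
  | nil => rfl
  | cons y v ih => exact ih _

theorem act_snoc (A : Mealy S X) (s : S) (v : List X) (x : X) :
    A.act s (v ++ [x]) = A.act s v ++ [(A.step (A.sec s v) x).1] := by
  induction v generalizing s with
  | nil => rfl
  | cons y v ih => exact congrArg (List.cons _) (ih _)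

theorem act_length (A : Mealy S X) (s : S) (v : List X) : (A.act s v).length = v.length := by
  induction v generalizing s with
  | nil => rfl
  | cons y v ih => simp [act, ih]

theorem act_bijective (A : Mealy S X) (hInv : A.Invertible) (s : S) :
    Function.Bijective (A.act s) := by
  constructor
  · intro v
    induction v generalizing s with
    | nil => intro w h; cases w <;> simp_all [act]
    | cons x v ih =>
      intro w h
      cases w with
      | nil => simp [act] at h
      | cons y w =>
        simp only [act, List.cons.injEq] at h
        have hxy : x = y := (hInv s).1 h.1
        subst hxy
        rw [ih _ h.2]
  · intro w
    induction w generalizing s with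
    | nil => exact ⟨[], rfl⟩
    | cons y w ih =>
      obtain ⟨x, hx⟩ := (hInv s).2 y
      obtain ⟨v, hv⟩ := ih (A.step s x).2
      exact ⟨x :: v, by simp only [act, hv]; exact congrArg (· :: w) hx⟩

theorem exists_pred (A : Mealy S X) (s : S) (h : s ∈ A.circuitStates) :
    ∃ t x, (A.step t x).2 = s := by
  obtain ⟨t, ⟨x, hx⟩, hr⟩ := h
  rcases Relation.ReflTransGen.cases_tail hr with rfl | ⟨c, _, y, hy⟩
  · rcases Relation.ReflTransGen.cases_tail hx with h | ⟨c, _, y, hy⟩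
    · exact ⟨_, x, h.symm⟩
    · exact ⟨c, y, hy⟩
  · exact ⟨c, y, hy⟩

theorem lsuffix_succ (p : ℕ → X) (n : ℕ) :
    lsuffix p (n + 1) = lsuffix (fun k => p (k + 1)) n ++ [p 0] := by
  simp [lsuffix, List.range_succ_eq_map, Function.comp_def]

theorem exists_path (A : Mealy S X) (hCA : ∀ s : S, s ∈ A.circuitStates) (s : S) (v : List X) :
    ∃ (σ : ℕ → S) (inp out : ℕ → X),
      (∀ n, A.step (σ (n + 1)) (inp n) = (out n, σ n)) ∧ σ 0 = A.sec s v ∧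
        v = lsuffix inp v.length ∧ A.act s v = lsuffix out v.length := by
  induction v using List.reverseRecOn with
  | nil =>
    choose p l hp using fun s => A.exists_pred s (hCA s)
    refine ⟨fun n => p^[n] s, fun n => l (p^[n] s), fun n => (A.step (p^[n + 1] s) (l (p^[n] s))).1,
      fun n => ?_, rfl, rfl, rfl⟩
    refine Prod.ext rfl ?_
    simp only [Function.iterate_succ_apply']
    exact hp _
  | append_singleton v x ih =>
    obtain ⟨σ, inp, out, h, h0, hi, ho⟩ := ih
    refine ⟨fun n => Nat.casesOn n (A.step (A.sec s v) x).2 σ,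
      fun n => Nat.casesOn n x inp, fun n => Nat.casesOn n (A.step (A.sec s v) x).1 out,
      fun n => ?_, ?_, ?_, ?_⟩
    · cases n with
      | zero => simp [h0]
      | succ n => exact h n
    · exact (sec_snoc A s v x).symm
    · rw [List.length_append, List.length_singleton, lsuffix_succ]
      exact congrArg (· ++ [x]) hi
    · rw [List.length_append, List.length_singleton, lsuffix_succ, act_snoc]
      exact congrArg (· ++ [_]) ho

theorem eEquiv_or_postCritical (A : Mealy S X) (hCA : ∀ s : S, s ∈ A.circuitStates)
    (s : S) (v : List X) :
    A.EEquiv v (A.act s v) ∨ (A.IsPostCriticalWord v ∧ A.IsPostCriticalWord (A.act s v)) := by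
  by_cases ht : A.IsTrivialState (A.sec s v)
  · exact Or.inl (Relation.EqvGen.rel _ _ ⟨s, Or.inl ⟨ht, rfl⟩⟩)
  · obtain ⟨σ, inp, out, h, h0, hi, ho⟩ := A.exists_path hCA s v
    rw [← h0] at ht
    refine Or.inr ⟨⟨inp, ⟨σ, inp, out, h, ht, Or.inl rfl⟩, hi⟩,
      ⟨out, ⟨σ, inp, out, h, ht, Or.inr rfl⟩, ?_⟩⟩
    rw [act_length]; exact ho

theorem orbit_act (A : Mealy S X) (hInv : A.Invertible) (s : S) (v : List X) :
    A.act s v ∈ A.orbit v :=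
  ⟨Equiv.ofBijective _ (A.act_bijective hInv s), Subgroup.subset_closure ⟨s, fun _ => rfl⟩, rfl⟩

theorem orbit_symm (A : Mealy S X) {v u : List X} (h : u ∈ A.orbit v) : v ∈ A.orbit u := by
  obtain ⟨g, hg, rfl⟩ := h
  exact ⟨g⁻¹, inv_mem hg, by simp⟩

theorem orbit_trans (A : Mealy S X) {v u w : List X} (h : u ∈ A.orbit v) (h' : w ∈ A.orbit u) :
    w ∈ A.orbit v := by
  obtain ⟨g, hg, rfl⟩ := h
  obtain ⟨k, hk, rfl⟩ := h'
  exact ⟨k * g, mul_mem hk hg, rfl⟩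

theorem orbit_of_eEquiv (A : Mealy S X) (hInv : A.Invertible) {v u : List X}
    (h : A.EEquiv v u) : u ∈ A.orbit v := by
  induction h with
  | rel v u h =>
    obtain ⟨s, ⟨_, rfl⟩ | ⟨_, rfl⟩⟩ := h
    · exact A.orbit_act hInv s v
    · exact A.orbit_symm (A.orbit_act hInv s u)
  | refl v => exact ⟨1, one_mem _, rfl⟩
  | symm _ _ _ ih => exact A.orbit_symm ih
  | trans _ _ _ _ _ h h' => exact A.orbit_trans h h'

theorem orbit_cases (A : Mealy S X) (hCA : ∀ s : S, s ∈ A.circuitStates) (v : List X)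
    (g : Equiv.Perm (List X)) (hg : g ∈ A.autGroup) :
    A.EEquiv v (g v) ∨ ∃ u, (u ∈ A.orbit v ∧ A.IsPostCriticalWord u) ∧ A.EEquiv u (g v) := by
  have key : ∀ (w w' : List X), w' ∈ A.orbit v →
      (A.EEquiv w w' ∨ A.IsPostCriticalWord w') →
      (A.EEquiv v w ∨ ∃ u, (u ∈ A.orbit v ∧ A.IsPostCriticalWord u) ∧ A.EEquiv u w) →
      (A.EEquiv v w' ∨ ∃ u, (u ∈ A.orbit v ∧ A.IsPostCriticalWord u) ∧ A.EEquiv u w') := by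
    rintro w w' ho (he | hp) h
    · rcases h with h | ⟨u, hu, h⟩
      · exact Or.inl (h.trans _ _ _ he)
      · exact Or.inr ⟨u, hu, h.trans _ _ _ he⟩
    · exact Or.inr ⟨w', ⟨ho, hp⟩, Relation.EqvGen.refl _⟩
  unfold autGroup at hg
  induction hg using Subgroup.closure_induction_left with
  | one => exact Or.inl (Relation.EqvGen.refl _)
  | mul_left x hx y hy ih =>
    refine key (y v) _ ⟨x * y, mul_mem (Subgroup.subset_closure hx) hy, rfl⟩ ?_ ih
    obtain ⟨s, hs⟩ := hx
    rw [Equiv.Perm.mul_apply, hs]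
    exact (A.eEquiv_or_postCritical hCA s (y v)).imp_right And.right
  | inv_mul_cancel x hx y hy ih =>
    refine key (y v) _ ⟨x⁻¹ * y, mul_mem (inv_mem (Subgroup.subset_closure hx)) hy, rfl⟩ ?_ ih
    obtain ⟨s, hs⟩ := hx
    have h := A.eEquiv_or_postCritical hCA s ((x⁻¹ * y) v)
    have hxy : x ((x⁻¹ * y) v) = y v := by simp
    rw [← hs, hxy] at h
    exact h.imp (fun h => h.symm) And.left

end Mealy

/-- For a bounded invertible automaton with `A = C(A)`, the orbit `O(v)`
is the union of `O^e(v)` and the `e`-orbits `O^e(u)` over all post-critical words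
`u ∈ O(v)`. -/
theorem orbit_eq_union_eOrbits {S X : Type*} [Fintype S] [Fintype X]
    (hX : 2 ≤ Fintype.card X) (A : Mealy S X) (hInv : A.Invertible)
    (hBdd : A.Bounded) (hCA : ∀ s : S, s ∈ A.circuitStates) (v : List X) :
    A.orbit v =
      A.eOrbit v ∪ ⋃ u ∈ { u | u ∈ A.orbit v ∧ A.IsPostCriticalWord u }, A.eOrbit u := by
  ext w
  simp only [Set.mem_union, Set.mem_iUnion, Set.mem_setOf_eq, exists_prop]
  constructor
  · rintro ⟨g, hg, rfl⟩
    exact A.orbit_cases hCA v g hg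
  · rintro (h | ⟨u, ⟨hu, _⟩, h⟩)
    · exact A.orbit_of_eEquiv hInv h
    · exact A.orbit_trans hu (A.orbit_of_eEquiv hInv h)
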